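/- arXiv:2312.02057 — 2 statements merged into one kernel-verified Lean document; each statement's English description precedes it below -/
import Mathlib

section
/- Let $\Lambda \subseteq \mathbb{R}^n$ be a full-rank lattice with successive minima $\lambda_1 \leq \cdots \leq \lambda_n$ with respect to the $\ell_\infty$-norm. Then $\lambda_1 \cdots \lambda_n \leq \det(\Lambda)$; in particular, $\lambda_1 \leq \det(\Lambda)^{1/n}$. -/
/-- The `k`-th successive minimum (w.r.t. the `ℓ∞`-norm, which is the norm on
`Fin n → ℝ`) of the lattice generated by the matrix `A`. -/
noncomputable def succMin (n : ℕ) (A : Matrix (Fin n) (Fin n) ℝ) (k : ℕ) : ℝ :=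
  sInf {R : ℝ | 0 < R ∧ ∃ v : Fin k → Fin n → ℤ,
    LinearIndependent ℝ (fun j => A.mulVec fun i => ((v j i : ℝ))) ∧
    ∀ j, ‖A.mulVec fun i => ((v j i : ℝ))‖ ≤ R}

/-!
Let `λ₁ ≤ … ≤ λ_n` be the successive minima and put `λ₀ = 0`. Choose a basis of the space in which
every lattice vector of norm less than `λ_k` has vanishing `k`-th coordinate. For an open convex set
`K`, measurable selection moves each `x ∈ K` to a point `c_j x ∈ K` that depends only on the
coordinates of `x` of index greater than `j` and has the same ones. The map
`T x = ∑ j, (λ_{j+1} - λ_j) • c_j x` is then triangular with diagonal `(λ_k)`, so it multiplies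
volumes by `λ₁ ⋯ λ_n` although it is not linear. If `k` is the last index at which `x, y ∈ K`
differ, then all terms with `j ≥ k` cancel in `T x - T y`, and this vector lies in `λ_k • (K - K)`
and has nonzero `k`-th coordinate. For `K` the ball of radius `1 / 2` it has norm less than `λ_k`,
so it is not a lattice vector. Hence the lattice translates of the image of `K` under `T` are
disjoint, and the volume of this image is at most the covolume.
-/

open MeasureTheory Module
open scoped Pointwise

section Selection

lemma exists_measurable_selection {α β : Type*} [MeasurableSpace α] [TopologicalSpace β]
    [TopologicalSpace.SeparableSpace β] [MeasurableSpace β] [Nonempty β] {r : α → β → Prop}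
    (hopen : ∀ a, IsOpen {b | r a b}) (hmeas : ∀ b, MeasurableSet {a | r a b}) :
    ∃ s : α → β, Measurable s ∧ ∀ a b, r a b → r a (s a) := by
  classical
  let u := TopologicalSpace.denseSeq β
  have exists_index (a : α) : ∃ m, r a (u m) ∨ ∀ m', ¬ r a (u m') := by
    by_cases h : ∃ m, r a (u m)
    · exact h.imp fun _ => Or.inl
    · exact ⟨0, Or.inr (not_exists.1 h)⟩
  refine ⟨fun a => u (Nat.find (exists_index a)), ?_, fun a b hab => ?_⟩
  · refine (measurable_from_nat (f := u)).comp (measurable_find exists_index fun m => ?_)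
    have never_hit : MeasurableSet {a | ∀ m', ¬ r a (u m')} := by
      rw [Set.ofPred_forall]
      exact .iInter fun m' => (hmeas (u m')).compl
    exact (hmeas (u m)).union never_hit
  · obtain ⟨m, hm⟩ := (TopologicalSpace.denseRange_denseSeq β).exists_mem_open (hopen a) ⟨b, hab⟩
    exact (Nat.find_spec (exists_index a)).resolve_right fun h => h m hm

lemma exists_measurable_representative_of_closedComplemented {E : Type*}
    [NormedAddCommGroup E] [NormedSpace ℝ E] [TopologicalSpace.SeparableSpace E]
    [MeasurableSpace E] [BorelSpace E]
    {W : Submodule ℝ E} (hW : W.ClosedComplemented) {K : Set E} (hK : IsOpen K) :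
    ∃ c : E → E, Measurable c ∧ (∀ x ∈ K, c x ∈ K) ∧ (∀ x, c x - x ∈ W) ∧
      ∀ x y, x - y ∈ W → c x = c y := by
  obtain ⟨p, hp⟩ := hW
  have : SecondCountableTopology E := UniformSpace.secondCountable_of_separable E
  obtain ⟨s, hs, hsK⟩ := exists_measurable_selection (r := fun a y : E => a + (p y : E) ∈ K)
    (fun a => hK.preimage (by fun_prop)) (fun y => (hK.preimage (by fun_prop)).measurableSet)
  let q : E → E := fun x => x - p x
  have : Continuous q := by fun_prop
  refine ⟨fun x => q x + p (s (q x)), by fun_prop, fun x hx => ?_, fun x => ?_, fun x y hxy => ?_⟩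
  · exact hsK (q x) x (by simpa [q] using hx)
  · rw [show q x + p (s (q x)) - x = (p (s (q x)) - p x : W) by simp [q]; abel]
    exact SetLike.coe_mem _
  · have hqxy : q x = q y := by
      have := congrArg ((↑) : W → E) (hp ⟨x - y, hxy⟩)
      simp only [map_sub, AddSubgroupClass.coe_sub] at this
      rwa [sub_eq_sub_iff_sub_eq_sub, eq_comm]
    simp only [hqxy]

end Selection

section Triangular

/-- A triangular, not necessarily linear, map with diagonal `l`: once the coordinates of index
greater than `k` are fixed, the `k`-th coordinate of `T x` is an affine function of that of `x`,
of slope `l k`, and it does not depend on the coordinates of index less than `k`. -/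
def IsTriangular {R V : Type*} [Ring R] [AddCommGroup V] [Module R V] {n : ℕ}
    (b : Basis (Fin n) R V) (l : Fin n → R) (T : V → V) : Prop :=
  ∀ k x y, (∀ i, k < i → b.repr x i = b.repr y i) →
    b.repr (T x) k - b.repr (T y) k = l k * (b.repr x k - b.repr y k)

lemma IsTriangular.eq_cons {n : ℕ} {T : (Fin (n + 1) → ℝ) → Fin (n + 1) → ℝ}
    (hT : IsTriangular (Pi.basisFun ℝ (Fin (n + 1))) 1 T) (x : Fin (n + 1) → ℝ) :
    T x = Fin.cons (x 0 + T (Fin.cons 0 (Fin.tail x)) 0)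
      (Fin.tail (T (Fin.cons 0 (Fin.tail x)))) := by
  have sub_eq (i : Fin (n + 1)) := hT i x (Fin.cons 0 (Fin.tail x)) fun j hj => by
    obtain ⟨j, rfl⟩ := Fin.exists_succ_eq.2 (Fin.ne_zero_of_lt hj)
    rfl
  simp only [Pi.basisFun_repr, Pi.one_apply, one_mul] at sub_eq
  refine funext (Fin.cases ?_ fun i => ?_)
  · simpa only [Fin.cons_zero, sub_zero, sub_eq_iff_eq_add] using sub_eq 0
  · simpa only [Fin.cons_succ, Fin.tail, sub_self, sub_eq_zero] using sub_eq i.succ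

lemma IsTriangular.measurePreserving {n : ℕ} {T : (Fin n → ℝ) → Fin n → ℝ}
    (hT : IsTriangular (Pi.basisFun ℝ (Fin n)) 1 T) (hTm : Measurable T) :
    MeasurePreserving T := by
  induction n with
  | zero => simpa only [Subsingleton.elim T id] using MeasurePreserving.id _
  | succ n ih =>
    have cons_measurable : Measurable (fun t : Fin n → ℝ => (Fin.cons 0 t : Fin (n + 1) → ℝ)) :=
      measurable_pi_iff.2 (Fin.cases (by simp) fun i => by simpa using measurable_pi_apply i)
    have section_measurable : Measurable (fun t : Fin n → ℝ => T (Fin.cons 0 t)) :=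
      hTm.comp cons_measurable
    have tail_preserving : MeasurePreserving (fun t : Fin n → ℝ => Fin.tail (T (Fin.cons 0 t))) :=
      ih (fun k x y hxy => by
          simpa [Fin.tail] using hT k.succ (Fin.cons 0 x) (Fin.cons 0 y)
            (Fin.cases (by simp) (by simpa using hxy)))
        (measurable_pi_iff.2 fun i => (measurable_pi_apply i.succ).comp section_measurable)
    have skew_preserving : MeasurePreserving fun p : (Fin n → ℝ) × ℝ =>
        (Fin.tail (T (Fin.cons 0 p.1)), p.2 + T (Fin.cons 0 p.1) 0) :=
      tail_preserving.skew_product (g := fun t a => a + T (Fin.cons 0 t) 0)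
        (measurable_snd.add ((measurable_pi_apply 0).comp (section_measurable.comp measurable_fst)))
        (.of_forall fun t => map_add_right_eq_self _ _)
    let e := (MeasurableEquiv.piFinSuccAbove (fun _ : Fin (n + 1) => ℝ) 0).trans .prodComm
    have e_preserving : MeasurePreserving e :=
      Measure.measurePreserving_swap.comp (volume_preserving_piFinSuccAbove _ 0)
    convert! e_preserving.symm.comp (skew_preserving.comp e_preserving)
    funext x
    exact (hT.eq_cons x).trans (e.symm_apply_apply _).symm

lemma IsTriangular.measure_eq_mul_preimage_pi {n : ℕ} {l : Fin n → ℝ} {T : (Fin n → ℝ) → Fin n → ℝ}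
    (hT : IsTriangular (Pi.basisFun ℝ (Fin n)) l T) (hTm : Measurable T) (hl : ∀ i, l i ≠ 0)
    (μ : Measure (Fin n → ℝ)) [μ.IsAddHaarMeasure] {S : Set (Fin n → ℝ)} (hS : MeasurableSet S) :
    μ S = ENNReal.ofReal |∏ i, l i| * μ (T ⁻¹' S) := by
  let D : (Fin n → ℝ) →ₗ[ℝ] (Fin n → ℝ) := (Matrix.diagonal l).toLin'
  let U : (Fin n → ℝ) → Fin n → ℝ := fun x i => (l i)⁻¹ * T x i
  have T_eq : T = D ∘ U := by
    funext x i
    simp [D, U, Matrix.mulVec_diagonal, hl i]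
  have U_measurable : Measurable U :=
    measurable_pi_iff.2 fun i => ((measurable_pi_apply i).comp hTm).const_mul _
  have U_triangular : IsTriangular (Pi.basisFun ℝ (Fin n)) 1 U := fun k x y hxy => by
    have := hT k x y hxy
    simp only [Pi.basisFun_repr, Pi.one_apply, one_mul, U] at this ⊢
    rw [← mul_sub, this, inv_mul_cancel_left₀ (hl k)]
  have U_preserving : MeasurePreserving U μ μ := by
    rw [Measure.isAddLeftInvariant_eq_smul μ volume]
    exact (U_triangular.measurePreserving U_measurable).smul_measure _
  have D_det : LinearMap.det D = ∏ i, l i := by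
    rw [LinearMap.det_toLin', Matrix.det_diagonal]
  have prod_ne_zero : ∏ i, l i ≠ 0 := Finset.prod_ne_zero_iff.2 fun i _ => hl i
  have hDS : MeasurableSet (D ⁻¹' S) := D.continuous_of_finiteDimensional.measurable hS
  rw [T_eq, Set.preimage_comp, U_preserving.measure_preimage hDS.nullMeasurableSet,
    Measure.addHaar_preimage_linearMap _ (D_det ▸ prod_ne_zero), D_det, ← mul_assoc,
    ← ENNReal.ofReal_mul (abs_nonneg _), ← abs_mul, mul_inv_cancel₀ prod_ne_zero, abs_one,
    ENNReal.ofReal_one, one_mul]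

lemma IsTriangular.conj_equivFun {R V : Type*} [Ring R] [AddCommGroup V] [Module R V] {n : ℕ}
    {b : Basis (Fin n) R V} {l : Fin n → R} {T : V → V} (hT : IsTriangular b l T) :
    IsTriangular (Pi.basisFun R (Fin n)) l (b.equivFun ∘ T ∘ b.equivFun.symm) := fun k x y hxy => by
  have repr_symm (z : Fin n → R) (i : Fin n) : b.repr (b.equivFun.symm z) i = z i :=
    congrFun (b.equivFun.apply_symm_apply z) i
  simpa only [Pi.basisFun_repr, Function.comp_apply, b.equivFun_apply, repr_symm] using
    hT k (b.equivFun.symm x) (b.equivFun.symm y)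
      (by simpa only [repr_symm, Pi.basisFun_repr] using hxy)

lemma IsTriangular.measure_eq_mul_preimage {E : Type*} [NormedAddCommGroup E] [NormedSpace ℝ E]
    [MeasurableSpace E] [BorelSpace E] {n : ℕ} {b : Basis (Fin n) ℝ E}
    {l : Fin n → ℝ} {T : E → E} (hT : IsTriangular b l T) (hTm : Measurable T)
    (hl : ∀ i, l i ≠ 0) (μ : Measure E) [μ.IsAddHaarMeasure] {S : Set E} (hS : MeasurableSet S) :
    μ S = ENNReal.ofReal |∏ i, l i| * μ (T ⁻¹' S) := by
  let e : E ≃ₜ (Fin n → ℝ) := b.equivFunL.toHomeomorph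
  have map_apply (A : Set E) : μ.map e (e.symm ⁻¹' A) = μ A := by
    rw [e.measurableEmbedding.map_apply, ← Set.preimage_comp, e.symm_comp_self, Set.preimage_id]
  have : (μ.map e).IsAddHaarMeasure := b.equivFunL.isAddHaarMeasure_map μ
  rw [← map_apply S, hT.conj_equivFun.measure_eq_mul_preimage_pi
    (e.measurable.comp (hTm.comp e.symm.measurable)) hl (μ.map e) (e.symm.measurable hS),
    ← map_apply (T ⁻¹' S)]
  have preimage_eq : (b.equivFun ∘ T ∘ b.equivFun.symm) ⁻¹' (e.symm ⁻¹' S) =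
      e.symm ⁻¹' (T ⁻¹' S) := by
    ext x
    exact iff_of_eq (congrArg (· ∈ S) (e.symm_apply_apply _))
  rw [preimage_eq]

end Triangular

section Expansion

variable {E : Type*} [NormedAddCommGroup E] [NormedSpace ℝ E] [FiniteDimensional ℝ E]
  [MeasurableSpace E] [BorelSpace E]

lemma exists_isTriangular_sub_mem_smul {n : ℕ} (b : Basis (Fin n) ℝ E) {K : Set E}
    (hKo : IsOpen K) (hKc : Convex ℝ K) {l : ℕ → ℝ} (hl0 : l 0 = 0) (hl : MonotoneOn l (Set.Iic n))
    (hlpos : ∀ k : Fin n, 0 < l (k + 1)) :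
    ∃ T : E → E, Measurable T ∧ IsTriangular b (fun k => l (k + 1)) T ∧
      ∀ (k : Fin n), ∀ x ∈ K, ∀ y ∈ K, (∀ i, k < i → b.repr x i = b.repr y i) →
        T x - T y ∈ l (k + 1) • (K - K) := by
  let W (j : ℕ) : Submodule ℝ E := ⨅ i : Fin n, ⨅ _ : j ≤ i, LinearMap.ker (b.coord i)
  have mem_W {j : ℕ} {x : E} : x ∈ W j ↔ ∀ i : Fin n, j ≤ i → b.repr x i = 0 := by
    simp [W]
  choose c c_measurable c_mem c_sub_mem c_congr using fun j =>
    exists_measurable_representative_of_closedComplemented (W := W j)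
      (.of_finiteDimensional_quotient (W j).closed_of_finiteDimensional) hKo
  let T : E → E := fun x => ∑ j ∈ Finset.range n, (l (j + 1) - l j) • c j x
  have T_sub {k : Fin n} {x y : E} (hxy : ∀ i, k < i → b.repr x i = b.repr y i) :
      T x - T y = ∑ j ∈ Finset.range (k + 1), (l (j + 1) - l j) • (c j x - c j y) := by
    simp only [T, ← Finset.sum_sub_distrib, ← smul_sub]
    refine (Finset.sum_subset (Finset.range_mono k.is_lt) fun j _ hj => ?_).symm
    have hkj : k < j := by simpa [Nat.lt_succ_iff] using hj
    rw [c_congr j x y (mem_W.2 fun i hi => ?_), sub_self, smul_zero]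
    rw [map_sub, Finsupp.sub_apply, sub_eq_zero, hxy i (hkj.trans_le hi)]
  have sum_eq (k : Fin n) : ∑ j ∈ Finset.range (k + 1), (l (j + 1) - l j) = l (k + 1) := by
    rw [Finset.sum_range_sub, hl0, sub_zero]
  refine ⟨T, Finset.measurable_sum _ fun j _ => (c_measurable j).const_smul _,
    fun k x y hxy => ?_, fun k x hx y hy hxy => ?_⟩
  · have repr_c {j : ℕ} (hj : j ≤ k) (z : E) : b.repr (c j z) k = b.repr z k := by
      simpa [sub_eq_zero] using mem_W.1 (c_sub_mem j z) k hj
    simp only [← Finsupp.sub_apply, ← map_sub, T_sub hxy, ← sum_eq, Finset.sum_mul, map_sum,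
      Finsupp.finsetSum_apply]
    refine Finset.sum_congr rfl fun j hj => ?_
    have hjk : j ≤ k := Nat.lt_succ_iff.1 (Finset.mem_range.1 hj)
    simp [repr_c hjk]
  -- `(l (k + 1))⁻¹ • (T x - T y)` is a convex combination of points of `K - K`.
  · have mem := (hKc.sub hKc).centerMass_mem (t := Finset.range (k + 1))
      (w := fun j => l (j + 1) - l j) (z := fun j => c j x - c j y) (fun j hj => ?_) ?_ fun j _ =>
        Set.sub_mem_sub (c_mem j x hx) (c_mem j y hy)
    · rwa [Finset.centerMass, sum_eq, ← T_sub hxy,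
        ← Set.mem_smul_set_iff_inv_smul_mem₀ (hlpos k).ne'] at mem
    · have := Finset.mem_range.1 hj
      exact sub_nonneg.2 (hl (by simp; omega) (by simp; omega) j.le_succ)
    · rw [sum_eq]; exact hlpos k

end Expansion

lemma exists_linearIndependent_mem_of_lt_finrank {R V : Type*} [DivisionRing R] [AddCommGroup V]
    [Module R V] {n : ℕ} {P : Fin n → Submodule R V}
    (hP : ∀ i : Fin n, (i : ℕ) < finrank R (P i)) :
    ∃ g : Fin n → V, LinearIndependent R g ∧ ∀ i, g i ∈ P i := by
  induction n with
  | zero => exact ⟨Fin.elim0, linearIndependent_empty_type, fun i => i.elim0⟩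
  | succ n ih =>
    obtain ⟨g, hg, hgP⟩ := ih (P := P ∘ Fin.castSucc) fun i => hP i.castSucc
    have := FiniteDimensional.span_of_finite R (Set.finite_range g)
    have not_le_span : ¬ P (Fin.last n) ≤ Submodule.span R (Set.range g) := fun hle => by
      refine (hP (Fin.last n)).not_ge ((Submodule.finrank_mono hle).trans ?_)
      rw [finrank_span_eq_card hg, Fintype.card_fin, Fin.val_last]
    obtain ⟨x, hx, hx_span⟩ := SetLike.not_le_iff_exists.1 not_le_span
    refine ⟨Fin.snoc g x, linearIndependent_finSnoc.2 ⟨hg, hx_span⟩, Fin.lastCases ?_ fun i => ?_⟩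
    · simpa only [Fin.snoc_last] using hx
    · simpa only [Fin.snoc_castSucc, Function.comp_apply] using hgP i

lemma exists_basis_repr_eq_zero {F V : Type*} [Field F] [AddCommGroup V] [Module F V]
    [FiniteDimensional F V] {W : Fin (finrank F V) → Submodule F V}
    (hW : ∀ k : Fin (finrank F V), finrank F (W k) ≤ k) :
    ∃ b : Basis (Fin (finrank F V)) F V, ∀ k, ∀ w ∈ W k, b.repr w k = 0 := by
  obtain ⟨g, hg, hgW⟩ := exists_linearIndependent_mem_of_lt_finrank
    (P := fun i => (W i.rev).dualAnnihilator) fun i => by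
      have := Subspace.finrank_add_finrank_dualAnnihilator_eq (W i.rev)
      have := hW i.rev
      rw [Fin.val_rev] at this
      omega
  let B := basisOfLinearIndependentOfCardEqFinrank' _ (hg.comp _ Fin.rev_injective)
    (by rw [Fintype.card_fin, Subspace.dual_finrank_eq])
  refine ⟨B.dualBasis.map (evalEquiv F V).symm, fun k w hw => ?_⟩
  have hB : B k ∈ (W k).dualAnnihilator := by simpa [B] using hgW k.rev
  simpa using (Submodule.mem_dualAnnihilator _).1 hB w hw

lemma exists_last_ne {ι α : Type*} [Finite ι] [LinearOrder ι] {f g : ι → α} (h : f ≠ g) :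
    ∃ k, f k ≠ g k ∧ ∀ i, k < i → f i = g i := by
  obtain ⟨k, hk, hmax⟩ := (Set.toFinite {i | f i ≠ g i}).exists_maximal (Function.ne_iff.1 h)
  exact ⟨k, hk, fun i hi => by_contra fun hne => (hmax hne hi.le).not_gt hi⟩

section SuccessiveMinima

variable {E : Type*} [NormedAddCommGroup E] [NormedSpace ℝ E]

/-- The `k`-th successive minimum of a lattice `L` in a real normed space, with `k` counted from
`1`. The junk value `0` at `k = 0` serves as the start of telescoping sums. -/
noncomputable def successiveMin (L : Submodule ℤ E) (k : ℕ) : ℝ :=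
  sInf {R : ℝ | 0 < R ∧ ∃ v : Fin k → L, LinearIndependent ℝ (fun j => (v j : E)) ∧
    ∀ j, ‖(v j : E)‖ ≤ R}

lemma successiveMin_nonneg (L : Submodule ℤ E) (k : ℕ) : 0 ≤ successiveMin L k :=
  Real.sInf_nonneg fun _ hR => hR.1.le

lemma successiveMin_zero (L : Submodule ℤ E) : successiveMin L 0 = 0 := by
  simp [successiveMin, Set.Ioi_def]

lemma successiveMin_le {L : Submodule ℤ E} {k : ℕ} {v : Fin k → L}
    (hv : LinearIndependent ℝ fun j => (v j : E)) {R : ℝ} (hR : 0 < R)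
    (hvR : ∀ j, ‖(v j : E)‖ ≤ R) :
    successiveMin L k ≤ R :=
  csInf_le ⟨0, fun _ h => h.1.le⟩ ⟨hR, v, hv, hvR⟩

lemma finrank_span_norm_lt_successiveMin_le [FiniteDimensional ℝ E] (L : Submodule ℤ E) (k : ℕ) :
    finrank ℝ (Submodule.span ℝ {w | w ∈ L ∧ ‖w‖ < successiveMin L (k + 1)}) ≤ k := by
  by_contra! hlt
  obtain ⟨f, hf, -, hf_indep⟩ := Submodule.exists_fun_fin_finrank_span_eq ℝ
    {w | w ∈ L ∧ ‖w‖ < successiveMin L (k + 1)}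
  let v : Fin (k + 1) → L := fun j => ⟨f (Fin.castLE hlt j), (hf _).1⟩
  have hv : LinearIndependent ℝ fun j => (v j : E) := hf_indep.comp _ (Fin.castLE_injective hlt)
  obtain ⟨j, hj⟩ := Finite.exists_max fun j => ‖(v j : E)‖
  exact ((successiveMin_le hv (norm_pos_iff.2 (hv.ne_zero j)) hj).trans_lt (hf _).2).false

lemma monotoneOn_successiveMin [FiniteDimensional ℝ E] (L : Submodule ℤ E) [DiscreteTopology L]
    [IsZLattice ℝ L] : MonotoneOn (successiveMin L) (Set.Iic (finrank ℝ E)) := by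
  intro k _ l hl hkl
  refine le_csInf ?_ fun R ⟨hR, v, hv, hvR⟩ =>
    successiveMin_le (hv.comp _ (Fin.castLE_injective hkl)) hR fun j => hvR _
  let B := finBasisOfFinrankEq ℤ L (ZLattice.rank ℝ L)
  have hB : LinearIndependent ℝ fun j => (B j : E) := by
    simpa only [← B.ofZLatticeBasis_apply ℝ L] using (B.ofZLatticeBasis ℝ L).linearIndependent
  refine ⟨1 + ∑ j, ‖(B j : E)‖, by positivity, _, hB.comp _ (Fin.castLE_injective hl), fun j =>
    (Finset.single_le_sum (f := fun j => ‖(B j : E)‖) (fun _ _ => norm_nonneg _)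
      (Finset.mem_univ _)).trans (le_add_of_nonneg_left zero_le_one)⟩

lemma successiveMin_one_pow_le_prod [FiniteDimensional ℝ E] (L : Submodule ℤ E)
    [DiscreteTopology L] [IsZLattice ℝ L] :
    successiveMin L 1 ^ finrank ℝ E ≤ ∏ k : Fin (finrank ℝ E), successiveMin L (k + 1) := by
  refine (Fin.prod_const _ _).ge.trans (Finset.prod_le_prod (fun k _ => successiveMin_nonneg L _)
    fun k _ => ?_)
  have succ_le : (k : ℕ) + 1 ≤ finrank ℝ E := k.is_lt
  exact monotoneOn_successiveMin L (le_add_self.trans succ_le) succ_le le_add_self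

end SuccessiveMinima

section Lattice

variable {E : Type*} [NormedAddCommGroup E] [NormedSpace ℝ E] [FiniteDimensional ℝ E]
  [MeasurableSpace E] [BorelSpace E] (L : Submodule ℤ E) [DiscreteTopology L] [IsZLattice ℝ L]

lemma measure_le_ofReal_covolume_of_injOn_mkQ {μ : Measure E} [μ.IsAddHaarMeasure] {S : Set E}
    (hS : MeasurableSet S) (hSL : S.InjOn L.mkQ) :
    μ S ≤ ENNReal.ofReal (ZLattice.covolume L μ) := by
  let B := Free.chooseBasis ℤ L
  have : MeasurableVAdd L E := inferInstanceAs (MeasurableVAdd L.toAddSubgroup E)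
  have : VAddInvariantMeasure L E μ := inferInstanceAs (VAddInvariantMeasure L.toAddSubgroup E μ)
  have hF := ZLattice.isAddFundamentalDomain B μ
  rw [ZLattice.covolume_eq_measure_fundamentalDomain L μ hF,
    ofReal_measureReal (ZSpan.fundamentalDomain_isBounded _).measure_lt_top.ne]
  by_contra! hlt
  obtain ⟨u, v, huv, h⟩ :=
    exists_pair_mem_lattice_not_disjoint_vadd hF hS.nullMeasurableSet hlt
  obtain ⟨_, ⟨x, hx, rfl⟩, y, hy, hxy⟩ := Set.not_disjoint_iff.1 h
  have vadd_eq : (v : E) + y = u + x := hxy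
  have sub_eq : x - y = (v - u : L) := by
    rw [AddSubgroupClass.coe_sub, sub_eq_sub_iff_add_eq_add, vadd_eq, add_comm]
  obtain rfl := hSL hx hy ((Submodule.Quotient.eq L).2 (sub_eq ▸ SetLike.coe_mem _))
  exact huv (Subtype.ext (add_right_cancel vadd_eq).symm)

lemma exists_isTriangular_successiveMin_injOn_mkQ_comp
    (hL : ∀ k : Fin (finrank ℝ E), 0 < successiveMin L (k + 1)) :
    ∃ (b : Basis (Fin (finrank ℝ E)) ℝ E) (T : E → E), Measurable T ∧
      IsTriangular b (fun k => successiveMin L (k + 1)) T ∧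
      (Metric.ball 0 (1 / 2)).InjOn (L.mkQ ∘ T) := by
  obtain ⟨b, hb⟩ := exists_basis_repr_eq_zero fun k : Fin (finrank ℝ E) =>
    finrank_span_norm_lt_successiveMin_le L k
  obtain ⟨T, T_measurable, T_triangular, T_sub⟩ := exists_isTriangular_sub_mem_smul b
    Metric.isOpen_ball (convex_ball (0 : E) (1 / 2)) (successiveMin_zero L)
    (monotoneOn_successiveMin L) hL
  refine ⟨b, T, T_measurable, T_triangular, fun x hx y hy mkQ_eq => ?_⟩
  by_contra hxy
  have sub_mem : T x - T y ∈ L := (Submodule.Quotient.eq L).1 mkQ_eq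
  obtain ⟨k, hk, heq⟩ := exists_last_ne (b.equivFun.injective.ne hxy)
  have norm_lt : ‖T x - T y‖ < successiveMin L (k + 1) := by
    have := T_sub k x hx y hy heq
    rwa [ball_sub_ball (by norm_num) (by norm_num), sub_self, add_halves,
      smul_unitBall_of_pos (hL k), mem_ball_zero_iff] at this
  have coord_eq := T_triangular k x y heq
  rw [← Finsupp.sub_apply, ← map_sub, hb k _ (Submodule.subset_span ⟨sub_mem, norm_lt⟩)] at coord_eq
  exact mul_ne_zero (hL k).ne' (sub_ne_zero.2 hk) coord_eq.symm

lemma ofReal_prod_successiveMin_mul_measure_ball_le (μ : Measure E) [μ.IsAddHaarMeasure] :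
    ENNReal.ofReal (∏ k : Fin (finrank ℝ E), successiveMin L (k + 1)) *
      μ (Metric.ball 0 (1 / 2)) ≤ ENNReal.ofReal (ZLattice.covolume L μ) := by
  have prod_nonneg : 0 ≤ ∏ k : Fin (finrank ℝ E), successiveMin L (k + 1) :=
    Finset.prod_nonneg fun k _ => successiveMin_nonneg L _
  rcases prod_nonneg.eq_or_lt' with prod_eq | prod_pos
  · simp [prod_eq]
  have hL (k : Fin (finrank ℝ E)) : 0 < successiveMin L (k + 1) :=
    (successiveMin_nonneg L _).lt_of_ne'
      (Finset.prod_ne_zero_iff.1 prod_pos.ne' k (Finset.mem_univ k))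
  obtain ⟨b, T, T_measurable, T_triangular, T_inj⟩ :=
    exists_isTriangular_successiveMin_injOn_mkQ_comp L hL
  let K : Set E := Metric.ball 0 (1 / 2)
  have image_measurable : MeasurableSet (T '' K) :=
    Metric.isOpen_ball.measurableSet.image_of_measurable_injOn T_measurable T_inj.of_comp
  calc
    _ ≤ ENNReal.ofReal (∏ k : Fin (finrank ℝ E), successiveMin L (k + 1)) *
        μ (T ⁻¹' (T '' K)) := by
      gcongr
      exact Set.subset_preimage_image T K
    _ = μ (T '' K) := by
      rw [T_triangular.measure_eq_mul_preimage T_measurable (fun k => (hL k).ne') μ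
        image_measurable, abs_of_pos prod_pos]
    _ ≤ ENNReal.ofReal (ZLattice.covolume L μ) :=
      measure_le_ofReal_covolume_of_injOn_mkQ L image_measurable T_inj.image_of_comp

theorem prod_successiveMin_le (μ : Measure E) [μ.IsAddHaarMeasure] :
    ∏ k : Fin (finrank ℝ E), successiveMin L (k + 1) ≤
      2 ^ finrank ℝ E * ZLattice.covolume L μ / μ.real (Metric.ball 0 1) := by
  have ball_pos : 0 < μ.real (Metric.ball (0 : E) 1) :=
    ENNReal.toReal_pos (Metric.measure_ball_pos μ 0 one_pos).ne' measure_ball_lt_top.ne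
  have mul_le := ofReal_prod_successiveMin_mul_measure_ball_le L μ
  rw [μ.addHaar_ball_of_pos 0 one_half_pos, ← ofReal_measureReal measure_ball_lt_top.ne,
    ← ENNReal.ofReal_mul (by positivity),
    ← ENNReal.ofReal_mul (Finset.prod_nonneg fun k _ => successiveMin_nonneg L _),
    ENNReal.ofReal_le_ofReal_iff (ZLattice.covolume_pos L μ).le, one_div, inv_pow,
    mul_left_comm, inv_mul_le_iff₀ (by positivity)] at mul_le
  exact (le_div_iff₀ ball_pos).2 mul_le

theorem minkowski_second_linf_general [Nontrivial E] (μ : Measure E) [μ.IsAddHaarMeasure] :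
    ∏ k : Fin (finrank ℝ E), successiveMin L (k + 1) ≤
        2 ^ finrank ℝ E * ZLattice.covolume L μ / μ.real (Metric.ball 0 1) ∧
      successiveMin L 1 ≤ (2 ^ finrank ℝ E * ZLattice.covolume L μ / μ.real (Metric.ball 0 1)) ^
        ((1 : ℝ) / finrank ℝ E) := by
  refine ⟨prod_successiveMin_le L μ, ?_⟩
  rw [← Real.pow_rpow_inv_natCast (successiveMin_nonneg L 1)
    (finrank_pos (R := ℝ) (M := E)).ne', ← one_div]
  exact Real.rpow_le_rpow (pow_nonneg (successiveMin_nonneg L 1) _)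
    ((successiveMin_one_pow_le_prod L).trans (prod_successiveMin_le L μ)) (by positivity)

end Lattice

section Matrix

lemma succMin_eq_successiveMin {n : ℕ} (A : Matrix (Fin n) (Fin n) ℝ) (k : ℕ) :
    succMin n A k = successiveMin (Submodule.span ℤ (Set.range A.col)) k := by
  have mulVec_eq (z : Fin n → ℤ) : A.mulVec (fun i => (z i : ℝ)) = ∑ i, z i • A.col i := by
    simp only [Matrix.mulVec_eq_sum, op_smul_eq_smul, Int.cast_smul_eq_zsmul, Matrix.col]
  simp only [succMin, successiveMin, mulVec_eq]
  congr! 4 with R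
  constructor
  · rintro ⟨z, hz⟩
    exact ⟨fun j => ⟨_, (Submodule.mem_span_range_iff_exists_fun ℤ).2 ⟨z j, rfl⟩⟩, hz⟩
  · rintro ⟨v, hv⟩
    choose z hz using fun j => (Submodule.mem_span_range_iff_exists_fun ℤ).1 (v j).2
    exact ⟨z, by simpa only [hz] using hv⟩

lemma covolume_span_range {ι : Type*} [Fintype ι] [DecidableEq ι] (b : Basis ι ℝ (ι → ℝ)) :
    ZLattice.covolume (Submodule.span ℤ (Set.range b)) = |(Matrix.of b).det| := by
  rw [ZLattice.covolume_eq_measure_fundamentalDomain _ _ (ZSpan.isAddFundamentalDomain b volume),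
    ZSpan.volume_real_fundamentalDomain]

end Matrix

/-- Minkowski's second theorem for the `ℓ∞`-norm. -/
theorem minkowski_second_linf
    (n : ℕ) (hn : 0 < n) (A : Matrix (Fin n) (Fin n) ℝ) (hA : IsUnit A.det) :
    (∏ i : Fin n, succMin n A (i + 1)) ≤ |A.det| ∧
      succMin n A 1 ≤ |A.det| ^ ((1 : ℝ) / n) := by
  have : Nonempty (Fin n) := Fin.pos_iff_nonempty.1 hn
  have col_independent : LinearIndependent ℝ A.col :=
    Matrix.linearIndependent_cols_iff_isUnit.2 ((Matrix.isUnit_iff_isUnit_det A).2 hA)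
  let b := basisOfLinearIndependentOfCardEqFinrank' A.col col_independent (by simp)
  have hb : ⇑b = A.col := coe_basisOfLinearIndependentOfCardEqFinrank' ..
  have covolume_eq : ZLattice.covolume (Submodule.span ℤ (Set.range b)) = |A.det| := by
    rw [covolume_span_range, hb, ← Matrix.det_transpose]
    rfl
  have volume_ball : volume.real (Metric.ball (0 : Fin n → ℝ) 1) = 2 ^ n := by
    simp [measureReal_def, Real.volume_pi_ball]
  have general := minkowski_second_linf_general (Submodule.span ℤ (Set.range b)) volume
  rw [covolume_eq, volume_ball, finrank_fin_fun, mul_div_cancel_left₀ _ (by positivity), hb]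
    at general
  simpa only [succMin_eq_successiveMin] using general
end

section
/- Assume the subspace theorem in the form: for real algebraic $\beta_1,\dots,\beta_n$ with $\{1,\beta_1,\dots,\beta_n\}$ $\mathbb{Q}$-linearly independent and any $\delta > 0$, only finitely many positive integers $q$ satisfy $q^{1+\delta}\prod_{i=1}^n \mathrm{dist}_{\mathbb{Z}}(q\beta_i) < 1$. Then for all positive integers $a_1,\dots,a_n$, there exists a constant $\gamma > 0$ depending only on $a_1,\dots,a_n$ such that for every $x \in \mathbb{Z}^n \setminus \{0\}$ with $E = \sum_{i=1}^n x_i\sqrt{a_i} \neq 0$, one has $|E| \geq \gamma \cdot (n\|x\|_\infty)^{-2n}$. -/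
/-- Distance of a real number to the nearest integer. -/
noncomputable def distZ (x : ℝ) : ℝ := |x - round x|

/-- The `ℓ∞`-norm of an integer vector, as a real number. -/
noncomputable def intNormInf (n : ℕ) (x : Fin n → ℤ) : ℝ :=
  ((Finset.univ.sup fun i => (x i).natAbs : ℕ) : ℝ)

/-!
Dividing a sum of square roots by one member of a `ℚ`-basis of the span of the radicals turns it
into an inhomogeneous form `a + ∑ y j * β j` with integer coefficients, where the `β j` are real
algebraic and `ℚ`-linearly independent together with `1`. The subspace theorem is about
simultaneous approximation, so it has to be transferred to such forms. If the form is tiny and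
`y i` is its largest coefficient, Dirichlet's pigeonhole argument, carried out on the `(q, p)` with
`a * q + ∑ y j * p j` divisible by `y i`, approximates all `β j`, `j ≠ i`, with denominator `q`;
smallness of the form then forces `q * β i` to be close to an integer as well. Such a `q` violates
the subspace inequality unless it is one of finitely many exceptions, and these are excluded by
choosing the precision of the approximation.
-/

open Filter

open scoped Matrix

/-- The subspace theorem in its simultaneous approximation form: numbers that are real algebraic
and `ℚ`-linearly independent together with `1` are not very well approximable. -/
def SubspaceTheorem : Prop :=
  ∀ (m : ℕ) (β : Fin m → ℝ), (∀ i, IsAlgebraic ℚ (β i)) →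
    LinearIndependent ℚ (Fin.cons 1 β : Fin (m + 1) → ℝ) →
    ∀ δ : ℝ, 0 < δ →
      {q : ℕ | 0 < q ∧ (q : ℝ) ^ (1 + δ) * ∏ i, distZ ((q : ℝ) * β i) < 1}.Finite

/-- The nonzero integer combinations of the family `v` are bounded below by a constant times
`‖x‖ ^ (-s)`, where `‖x‖` is the sup norm of the coefficient vector. -/
def HasSeparationExponent {ι : Type*} [Fintype ι] (v : ι → ℝ) (s : ℕ) : Prop :=
  ∃ γ : ℝ, 0 < γ ∧ ∀ x : ι → ℤ, ∑ i, (x i : ℝ) * v i ≠ 0 →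
    γ / ‖x‖ ^ s ≤ |∑ i, (x i : ℝ) * v i|

/-! ### Integer vectors -/

lemma intNormInf_eq_norm {n : ℕ} (x : Fin n → ℤ) : intNormInf n x = ‖x‖ := by
  have hnnnorm (i : Fin n) : ‖x i‖₊ = ((x i).natAbs : NNReal) := (NNReal.natCast_natAbs _).symm
  simp only [intNormInf, Pi.norm_def, hnnnorm]
  rw [← NNReal.coe_natCast, Finset.apply_sup_eq_sup_comp_of_linearOrder _ Nat.mono_cast (by simp)]
  rfl

lemma one_le_norm_of_ne_zero {ι : Type*} [Fintype ι] {x : ι → ℤ} (hx : x ≠ 0) : 1 ≤ ‖x‖ := by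
  obtain ⟨i, hi⟩ := Function.ne_iff.mp hx
  calc (1 : ℝ) ≤ ‖x i‖ := by
        rw [Int.norm_eq_abs]
        exact_mod_cast Int.one_le_abs hi
    _ ≤ ‖x‖ := norm_le_pi_norm x i

lemma norm_pow_le_mul_intNormInf_pow {n : ℕ} {x : Fin n → ℤ} (hx : x ≠ 0) :
    ‖x‖ ^ (2 * n - 1) ≤ ((n : ℝ) * intNormInf n x) ^ (2 * n) := by
  have hx1 : 1 ≤ ‖x‖ := one_le_norm_of_ne_zero hx
  obtain ⟨i, -⟩ := Function.ne_iff.mp hx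
  have hn : (1 : ℝ) ≤ n := by exact_mod_cast i.pos
  rw [intNormInf_eq_norm]
  calc ‖x‖ ^ (2 * n - 1) ≤ ‖x‖ ^ (2 * n) := pow_le_pow_right₀ hx1 (Nat.sub_le _ _)
    _ ≤ (n * ‖x‖) ^ (2 * n) := by
        gcongr
        exact le_mul_of_one_le_left (norm_nonneg x) hn

lemma exists_norm_apply_eq_pi_norm {ι E : Type*} [Fintype ι] [Nonempty ι]
    [SeminormedAddGroup E] (x : ι → E) : ∃ i, ‖x i‖ = ‖x‖ := by
  obtain ⟨i, hi⟩ := Finite.exists_max fun i => ‖x i‖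
  exact ⟨i, le_antisymm (norm_le_pi_norm x i) ((pi_norm_le_iff_of_nonempty x).mpr hi)⟩

/-! ### Clearing denominators -/

lemma exists_linearIndependent_integer_coords (R : Type*) {K V ι : Type*} [CommRing R] [Field K]
    [Algebra R K] [IsFractionRing R K] [AddCommGroup V] [Module K V] [Module R V]
    [IsScalarTower R K V] [Fintype ι] (v : ι → V) :
    ∃ (d : ℕ) (f : Fin d → ι) (D : R) (r : ι → Fin d → R), d ≤ Fintype.card ι ∧
      D ∈ nonZeroDivisors R ∧ LinearIndependent K (v ∘ f) ∧
      ∀ i, D • v i = ∑ j, r i j • v (f j) := by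
  obtain ⟨κ, g, hg, hspan, hli⟩ := exists_linearIndependent' K v
  have : Fintype κ := Fintype.ofInjective g hg
  let e := (Fintype.equivFin κ).symm
  have hspan' : Submodule.span K (Set.range (v ∘ g ∘ e)) = Submodule.span K (Set.range v) := by
    rw [← Function.comp_assoc, e.surjective.range_comp, hspan]
  have hcoords (i : ι) : ∃ c : Fin (Fintype.card κ) → K, ∑ j, c j • (v ∘ g ∘ e) j = v i := by
    rw [← Submodule.mem_span_range_iff_exists_fun, hspan']
    exact Submodule.subset_span (Set.mem_range_self i)
  choose c hc using hcoords
  obtain ⟨D, hD⟩ := IsLocalization.exist_integer_multiples_of_finite (nonZeroDivisors R)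
    fun z : ι × Fin (Fintype.card κ) => c z.1 z.2
  choose r hr using hD
  refine ⟨Fintype.card κ, g ∘ e, D, fun i j => r (i, j), Fintype.card_le_of_injective g hg, D.2,
    hli.comp e e.injective, fun i => ?_⟩
  simp only [← algebraMap_smul K (r _), hr, ← hc i, Finset.smul_sum, smul_assoc,
    Function.comp_apply]

/-! ### Distance to the nearest integer -/

lemma distZ_nonneg (x : ℝ) : 0 ≤ distZ x := abs_nonneg _

lemma distZ_le_abs_sub_intCast (x : ℝ) (p : ℤ) : distZ x ≤ |x - p| := round_le x p

lemma distZ_natCast_mul_pos {β : ℝ} (hβ : Irrational β) {q : ℕ} (hq : q ≠ 0) :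
    0 < distZ (q * β) :=
  abs_pos.mpr (sub_ne_zero.mpr ((hβ.natCast_mul hq).ne_int _))

lemma irrational_of_linearIndependent_cons_one {m : ℕ} {β : Fin m → ℝ}
    (hli : LinearIndependent ℚ (Fin.cons 1 β : Fin (m + 1) → ℝ)) (j : Fin m) :
    Irrational (β j) := by
  have hpair : LinearIndependent ℚ ![(1 : ℝ), β j] := by
    convert hli.comp ![0, j.succ] (by
      simp [Function.Injective, Fin.forall_fin_two, (Fin.succ_ne_zero j).symm]) using 1
    ext i
    fin_cases i <;> rfl
  rintro ⟨r, hr⟩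
  exact (LinearIndependent.pair_iff' one_ne_zero).mp hpair r (by simpa [Rat.smul_def] using hr)

/-! ### Transference -/

lemma abs_fract_sub_fract_lt_of_floor_eq {N u v : ℝ} (hN : 0 < N)
    (h : ⌊N * Int.fract u⌋ = ⌊N * Int.fract v⌋) : |Int.fract u - Int.fract v| < 1 / N := by
  have hlt := Int.abs_sub_lt_one_of_floor_eq_floor h
  rwa [← mul_sub, abs_mul, abs_of_pos hN, ← lt_div_iff₀' hN] at hlt

/-- For trivial `G` this is Dirichlet's simultaneous approximation theorem. -/
lemma exists_simultaneous_approx_of_map_eq_zero {ι G : Type*} [Fintype ι] [AddGroup G] [Fintype G]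
    (φ : ℤ × (ι → ℤ) →+ G) (β : ι → ℝ) {N : ℕ} (hN : 0 < N) :
    ∃ (q : ℕ) (p : ι → ℤ), 0 < q ∧ q ≤ Fintype.card G * N ^ Fintype.card ι ∧
      φ (q, p) = 0 ∧ ∀ j, |(q : ℝ) * β j - p j| < 1 / N := by
  classical
  have hNR : (0 : ℝ) < N := by exact_mod_cast hN
  let Q := Fintype.card G * N ^ Fintype.card ι
  let floors (t : ℕ) (j : ι) : ℤ := ⌊(t : ℝ) * β j⌋
  let cell (t : ℕ) (j : ι) : ℤ := ⌊(N : ℝ) * Int.fract ((t : ℝ) * β j)⌋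
  let cells : Finset ((ι → ℤ) × G) :=
    Fintype.piFinset (fun _ => Finset.Ico 0 (N : ℤ)) ×ˢ Finset.univ
  have hcell (t : ℕ) : (cell t, φ (t, floors t)) ∈ cells := by
    simp only [cells, cell, Finset.mem_product, Fintype.mem_piFinset, Finset.mem_Ico,
      Finset.mem_univ, and_true, Int.floor_nonneg, Int.floor_lt, Int.cast_natCast]
    exact fun j => ⟨mul_nonneg hNR.le (Int.fract_nonneg _),
      mul_lt_of_lt_one_right hNR (Int.fract_lt_one _)⟩
  have hcard : cells.card < (Finset.range (Q + 1)).card := by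
    simp [cells, Q, mul_comm]
  obtain ⟨t, ht, u, hu, hne, heq⟩ :=
    Finset.exists_ne_map_eq_of_card_lt_of_maps_to hcard fun t _ => hcell t
  wlog hlt : u < t generalizing t u
  · exact this u hu t ht hne.symm heq.symm (hne.lt_or_gt.resolve_right hlt)
  refine ⟨t - u, floors t - floors u, Nat.sub_pos_of_lt hlt,
    (Nat.sub_le t u).trans (Finset.mem_range_succ_iff.mp ht), ?_, fun j => ?_⟩
  · rw [Nat.cast_sub hlt.le, ← Prod.mk_sub_mk, map_sub, (Prod.mk.inj heq).2, sub_self]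
  · have hfract : ((t - u : ℕ) : ℝ) * β j - ((floors t - floors u) j : ℤ) =
        Int.fract ((t : ℝ) * β j) - Int.fract ((u : ℝ) * β j) := by
      rw [Nat.cast_sub hlt.le]
      simp only [floors, Pi.sub_apply, Int.cast_sub, Int.fract]
      ring
    rw [hfract]
    exact abs_fract_sub_fract_lt_of_floor_eq hNR (congrFun (Prod.mk.inj heq).1 j)

lemma abs_sub_le_of_abs_form_le {ι : Type*} [Fintype ι] {β : ι → ℝ} {θ ε : ℝ} {a b r : ℤ}
    {q : ℕ} {p y : ι → ℤ} (hb : b ≠ 0) (hy : ∀ j, |y j| ≤ |b|)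
    (hdvd : a * q + ∑ j, y j * p j = b * r) (hp : ∀ j, |(q : ℝ) * β j - p j| ≤ ε)
    (hform : q * |(a : ℝ) + b * θ + ∑ j, (y j : ℝ) * β j| ≤ ε) :
    |(q : ℝ) * θ - (-r : ℤ)| ≤ (Fintype.card ι + 1) * ε := by
  set e := (a : ℝ) + b * θ + ∑ j, (y j : ℝ) * β j with he
  have hb1 : 1 ≤ |(b : ℝ)| := by exact_mod_cast Int.one_le_abs hb
  have hε : 0 ≤ ε := le_trans (by positivity) hform
  have hdvdR : (a : ℝ) * q + ∑ j, (y j : ℝ) * p j = b * r := by exact_mod_cast hdvd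
  have herror : (b : ℝ) * (q * θ - (-r : ℤ)) = q * e - ∑ j, (y j : ℝ) * (q * β j - p j) := by
    simp only [he, mul_sub, mul_add, Finset.sum_sub_distrib, Finset.mul_sum,
      mul_left_comm (_ : ℝ) (q : ℝ)]
    push_cast
    linear_combination -hdvdR
  have hsum : |∑ j, (y j : ℝ) * (q * β j - p j)| ≤ Fintype.card ι * (|(b : ℝ)| * ε) := by
    rw [← nsmul_eq_mul, ← Finset.card_univ]
    refine (Finset.abs_sum_le_sum_abs _ _).trans (Finset.sum_le_card_nsmul _ _ _ fun j _ => ?_)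
    rw [abs_mul]
    exact mul_le_mul (by exact_mod_cast hy j) (hp j) (abs_nonneg _) (abs_nonneg _)
  refine le_of_mul_le_mul_left ?_ (one_pos.trans_le hb1)
  calc |(b : ℝ)| * |(q : ℝ) * θ - (-r : ℤ)|
      = |q * e - ∑ j, (y j : ℝ) * (q * β j - p j)| := by rw [← abs_mul, herror]
    _ ≤ |q * e| + |∑ j, (y j : ℝ) * (q * β j - p j)| := abs_sub _ _
    _ ≤ |(b : ℝ)| * ε + Fintype.card ι * (|(b : ℝ)| * ε) := by
        refine add_le_add ?_ hsum
        rw [abs_mul, Nat.abs_cast]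
        exact hform.trans (le_mul_of_one_le_left hε hb1)
    _ = |(b : ℝ)| * ((Fintype.card ι + 1) * ε) := by ring

lemma exists_distZ_le_of_abs_form_le {ι : Type*} [Fintype ι] {β : ι → ℝ} {θ : ℝ} {a b : ℤ}
    {y : ι → ℤ} (hb : b ≠ 0) (hy : ∀ j, |y j| ≤ |b|) {N : ℕ} (hN : 0 < N)
    (hform : |(b : ℝ)| * N ^ Fintype.card ι * |(a : ℝ) + b * θ + ∑ j, (y j : ℝ) * β j| ≤ 1 / N) :
    ∃ q : ℕ, 0 < q ∧ (q : ℝ) ≤ |(b : ℝ)| * N ^ Fintype.card ι ∧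
      (∀ j, distZ (q * β j) ≤ 1 / N) ∧ distZ (q * θ) ≤ (Fintype.card ι + 1) * (1 / N) := by
  have : NeZero b.natAbs := ⟨Int.natAbs_ne_zero.mpr hb⟩
  let residue : ℤ × (ι → ℤ) →+ ZMod b.natAbs :=
    (Int.castAddHom _).comp (AddMonoidHom.mk' (fun z => a * z.1 + y ⬝ᵥ z.2) fun z w => by
      simp only [Prod.fst_add, Prod.snd_add, dotProduct_add]
      ring)
  obtain ⟨q, p, hq, hqle, hres, hp⟩ := exists_simultaneous_approx_of_map_eq_zero residue β hN
  obtain ⟨r, hr⟩ : b ∣ a * q + ∑ j, y j * p j :=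
    Int.natAbs_dvd.mp ((ZMod.intCast_zmod_eq_zero_iff_dvd _ _).mp hres)
  have hqleR : (q : ℝ) ≤ |(b : ℝ)| * N ^ Fintype.card ι := by
    rw [ZMod.card] at hqle
    rw [← Int.cast_abs, ← Nat.cast_natAbs]
    exact_mod_cast hqle
  refine ⟨q, hq, hqleR, fun j => (distZ_le_abs_sub_intCast _ _).trans (hp j).le, ?_⟩
  exact (distZ_le_abs_sub_intCast _ _).trans (abs_sub_le_of_abs_form_le hb hy hr
    (fun j => (hp j).le) ((mul_le_mul_of_nonneg_right hqleR (abs_nonneg _)).trans hform))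

/-! ### Lower bounds for inhomogeneous forms -/

lemma rpow_one_add_mul_lt_one {k : ℕ} {q Y K P δ : ℝ} (hq : 0 < q) (hY : 1 ≤ Y) (hK : 1 ≤ K)
    (hδ : 0 ≤ δ) (hδk : δ * (2 * k + 1) ≤ 1) (hqle : q ≤ Y * (K * Y ^ 2) ^ k)
    (hP : P ≤ (k + 1) / (K * Y ^ 2) ^ (k + 1)) (hKδ : (k + 1 : ℝ) < K ^ (1 - δ * (2 * k + 1))) :
    q ^ (1 + δ) * P < 1 := by
  have hT : 0 < K * Y := by positivity
  have hqT : q ≤ (K * Y) ^ (2 * k + 1) := calc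
    q ≤ Y * (K * Y ^ 2) ^ k * 1 := by rwa [mul_one]
    _ ≤ Y * (K * Y ^ 2) ^ k * K ^ (k + 1) := by gcongr; exact one_le_pow₀ hK
    _ = (K * Y) ^ (2 * k + 1) := by ring
  have hqδ : q ^ δ ≤ (K * Y) ^ (δ * (2 * k + 1)) := calc
    q ^ δ ≤ ((K * Y) ^ (2 * k + 1)) ^ δ := by gcongr
    _ = (K * Y) ^ (δ * (2 * k + 1)) := by
      rw [← Real.rpow_natCast, ← Real.rpow_mul hT.le, mul_comm δ]
      push_cast
      rfl
  have hKη : K ^ (1 - δ * (2 * k + 1)) ≤ (K * Y) ^ (1 - δ * (2 * k + 1)) :=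
    Real.rpow_le_rpow (by positivity) (le_mul_of_one_le_right (by positivity) hY) (by linarith)
  calc q ^ (1 + δ) * P
      ≤ q * q ^ δ * ((k + 1) / (K * Y ^ 2) ^ (k + 1)) := by
        rw [Real.rpow_add hq, Real.rpow_one]
        gcongr
    _ ≤ Y * (K * Y ^ 2) ^ k * (K * Y) ^ (δ * (2 * k + 1)) *
          ((k + 1) / (K * Y ^ 2) ^ (k + 1)) := by gcongr
    _ = (k + 1) / (K * Y) ^ (1 - δ * (2 * k + 1)) := by
        rw [Real.rpow_sub hT, Real.rpow_one]
        field_simp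
        ring
    _ < 1 := by
        rw [div_lt_one (by positivity)]
        exact hKδ.trans_le hKη

lemma eventually_div_lt_distZ {ι : Type*} [Finite ι] {β : ι → ℝ} (hβ : ∀ j, Irrational (β j))
    {S : Set ℕ} (hS : S.Finite) (hpos : ∀ q ∈ S, q ≠ 0) (C : ℝ) :
    ∀ᶠ K : ℕ in atTop, ∀ q ∈ S, ∀ j, C / K < distZ (q * β j) :=
  hS.eventually_all.mpr fun q hq => eventually_all.mpr fun j =>
    (tendsto_const_div_atTop_nhds_zero_nat C).eventually_lt_const
      (distZ_natCast_mul_pos (hβ j) (hpos q hq))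

lemma exists_small_distZ_of_abs_form_le {ι : Type*} [Fintype ι] {k : ℕ}
    (hk : Fintype.card ι = k + 1) {β : ι → ℝ} {a : ℤ} {y : ι → ℤ} (hy : y ≠ 0) {i : ι}
    (hi : ‖y i‖ = ‖y‖) {K : ℕ} (hK : 0 < K)
    (hform : |(a : ℝ) + ∑ j, (y j : ℝ) * β j| ≤ 1 / (K ^ (k + 1) * ‖y‖ ^ (2 * (k + 1) + 1))) :
    ∃ q : ℕ, 0 < q ∧ (q : ℝ) ≤ ‖y‖ * (K * ‖y‖ ^ 2) ^ k ∧
      distZ (q * β i) ≤ (k + 1) / (K * ‖y‖ ^ 2) ∧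
      ∏ j, distZ (q * β j) ≤ (k + 1) / (K * ‖y‖ ^ 2) ^ (k + 1) := by
  classical
  have hnorm : 0 < ‖y‖ := norm_pos_iff.mpr hy
  have hyi : y i ≠ 0 := norm_ne_zero_iff.mp (hi ▸ hnorm.ne')
  have hmax (j : ι) : |y j| ≤ |y i| := by
    have hle := hi ▸ norm_le_pi_norm y j
    rw [Int.norm_eq_abs, Int.norm_eq_abs] at hle
    exact_mod_cast hle
  have habs : |(y i : ℝ)| = ‖y‖ := hi ▸ (Int.norm_eq_abs (y i)).symm
  have hcard : Fintype.card {j // j ≠ i} = k := by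
    rw [Fintype.card_subtype_compl, Fintype.card_subtype_eq, hk, Nat.add_sub_cancel]
  -- Precision `N` makes `q * ∏ j, distZ (q * β j)` at most `(k + 1) * ‖y‖ / N`, so `N` has to grow
  -- faster than `‖y‖`; the square keeps the exponents integral.
  have hN : 0 < K * (y i).natAbs ^ 2 := by positivity
  have hNcast : ((K * (y i).natAbs ^ 2 : ℕ) : ℝ) = K * ‖y‖ ^ 2 := by
    rw [← habs]
    push_cast [Nat.cast_natAbs]
    rfl
  rw [Fintype.sum_eq_add_sum_subtype_ne _ i, ← add_assoc] at hform
  obtain ⟨q, hq, hqle, hother, hpivot⟩ := exists_distZ_le_of_abs_form_le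
    (β := fun j : {j // j ≠ i} => β j) (θ := β i) (a := a) hyi (fun j => hmax j) hN (by
      rw [hNcast, habs, hcard, le_div_iff₀ (by positivity)]
      rw [le_div_iff₀ (by positivity)] at hform
      exact hform.trans_eq' (by ring))
  rw [hcard, hNcast, mul_one_div] at hpivot
  rw [hcard, hNcast, habs] at hqle
  refine ⟨q, hq, hqle, hpivot, ?_⟩
  calc ∏ j, distZ (q * β j)
      = distZ (q * β i) * ∏ j : {j // j ≠ i}, distZ (q * β j) :=
        Fintype.prod_eq_mul_prod_subtype_ne _ i
    _ ≤ (k + 1) / (K * ‖y‖ ^ 2) * (1 / (K * ‖y‖ ^ 2)) ^ k := by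
        refine mul_le_mul hpivot ?_ (Finset.prod_nonneg fun _ _ => distZ_nonneg _) (by positivity)
        rw [← hNcast, ← hcard]
        exact (Finset.prod_le_prod (fun _ _ => distZ_nonneg _) fun j _ => hother j).trans_eq
          (by simp)
    _ = (k + 1) / (K * ‖y‖ ^ 2) ^ (k + 1) := by
        rw [one_div_pow, div_mul_div_comm, mul_one, ← pow_succ']

lemma exists_div_norm_pow_le_abs_form {ι : Type*} [Fintype ι] {β : ι → ℝ}
    (hβ : ∀ j, Irrational (β j)) {δ : ℝ} (hδ : 0 ≤ δ) (hδι : δ * (2 * Fintype.card ι - 1) < 1)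
    (hfin : {q : ℕ | 0 < q ∧ (q : ℝ) ^ (1 + δ) * ∏ j, distZ (q * β j) < 1}.Finite) :
    ∃ c : ℝ, 0 < c ∧ ∀ (a : ℤ) (y : ι → ℤ), y ≠ 0 →
      c / ‖y‖ ^ (2 * Fintype.card ι + 1) ≤ |(a : ℝ) + ∑ j, (y j : ℝ) * β j| := by
  have hlarge : ∀ᶠ K : ℕ in atTop,
      (Fintype.card ι : ℝ) < (K : ℝ) ^ (1 - δ * (2 * Fintype.card ι - 1)) :=
    ((tendsto_rpow_atTop (sub_pos.mpr hδι)).comp tendsto_natCast_atTop_atTop).eventually_gt_atTop _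
  obtain ⟨K, hdist, hKδ, hK⟩ := ((eventually_div_lt_distZ hβ hfin (fun q hq => hq.1.ne')
    (Fintype.card ι)).and (hlarge.and (eventually_gt_atTop 0))).exists
  have hK1 : (1 : ℝ) ≤ K := by exact_mod_cast hK
  refine ⟨1 / K ^ Fintype.card ι, by positivity, fun a y hy => ?_⟩
  by_contra! hform
  have hy1 : 1 ≤ ‖y‖ := one_le_norm_of_ne_zero hy
  obtain ⟨j, -⟩ := Function.ne_iff.mp hy
  have : Nonempty ι := ⟨j⟩
  obtain ⟨i, hi⟩ := exists_norm_apply_eq_pi_norm y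
  obtain ⟨k, hk⟩ := Nat.exists_eq_succ_of_ne_zero (Fintype.card_ne_zero (α := ι))
  have hcast : (2 * Fintype.card ι - 1 : ℝ) = 2 * k + 1 := by
    rw [hk]
    push_cast
    ring
  rw [hcast] at hδι hKδ
  rw [hk, div_div] at hform
  obtain ⟨q, hq, hqle, hpivot, hprod⟩ := exists_small_distZ_of_abs_form_le hk hy hi hK hform.le
  have hmem := rpow_one_add_mul_lt_one (by exact_mod_cast hq) hy1 hK1 hδ hδι.le hqle hprod
    (by rw [hk] at hKδ; exact_mod_cast hKδ)
  refine (hdist q ⟨hq, hmem⟩ i).not_ge (hpivot.trans ?_)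
  rw [hk, Nat.cast_succ]
  have hKy : (K : ℝ) ≤ K * ‖y‖ ^ 2 :=
    le_mul_of_one_le_right (by positivity) (one_le_pow₀ hy1)
  gcongr

/-! ### Separation exponents -/

namespace HasSeparationExponent

variable {ι κ : Type*} [Fintype ι] [Fintype κ] {v : ι → ℝ} {w : κ → ℝ} {s t : ℕ}

lemma mono (hv : HasSeparationExponent v s) (hst : s ≤ t) : HasSeparationExponent v t := by
  obtain ⟨γ, hγ, hsep⟩ := hv
  refine ⟨γ, hγ, fun x hE => le_trans ?_ (hsep x hE)⟩
  have hx : 1 ≤ ‖x‖ := one_le_norm_of_ne_zero fun h => hE (by simp [h])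
  gcongr

lemma of_integer_coords (hw : HasSeparationExponent w s) {D : ℝ} (hD : D ≠ 0) {r : ι → κ → ℤ}
    (hr : ∀ i, D * v i = ∑ j, (r i j : ℝ) * w j) : HasSeparationExponent v s := by
  obtain ⟨γ, hγ, hsep⟩ := hw
  let C : ℝ := 1 + ∑ i, ‖r i‖
  have hC : 0 < C := by positivity
  refine ⟨γ / (|D| * C ^ s), by positivity, fun x hE => ?_⟩
  let y : κ → ℤ := ∑ i, x i • r i
  have hcoords : D * ∑ i, (x i : ℝ) * v i = ∑ j, (y j : ℝ) * w j := by
    simp only [y, Finset.sum_apply, Pi.smul_apply, smul_eq_mul, Int.cast_sum, Int.cast_mul,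
      Finset.mul_sum, Finset.sum_mul, mul_left_comm D, hr]
    rw [Finset.sum_comm]
    simp only [mul_assoc]
  have hE' : ∑ j, (y j : ℝ) * w j ≠ 0 := hcoords ▸ mul_ne_zero hD hE
  have hy : 0 < ‖y‖ := norm_pos_iff.mpr fun h => hE' (by simp [h])
  have hyx : ‖y‖ ≤ C * ‖x‖ := calc
    ‖y‖ ≤ ∑ i, ‖x i‖ * ‖r i‖ := norm_sum_le_of_le _ fun i _ => norm_smul_le _ _
    _ ≤ ∑ i, ‖x‖ * ‖r i‖ := by gcongr with i; exact norm_le_pi_norm x i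
    _ = (∑ i, ‖r i‖) * ‖x‖ := by rw [← Finset.mul_sum, mul_comm]
    _ ≤ C * ‖x‖ := by gcongr; exact le_add_of_nonneg_left zero_le_one
  calc γ / (|D| * C ^ s) / ‖x‖ ^ s = γ / (C * ‖x‖) ^ s / |D| := by rw [mul_pow]; field_simp
    _ ≤ γ / ‖y‖ ^ s / |D| := by gcongr
    _ ≤ |D * ∑ i, (x i : ℝ) * v i| / |D| := by
        rw [hcoords]
        gcongr
        exact hsep y hE'
    _ = |∑ i, (x i : ℝ) * v i| := by
        rw [abs_mul, mul_div_cancel_left₀ _ (abs_ne_zero.mpr hD)]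

lemma cons_one {m : ℕ} {β : Fin m → ℝ} {c : ℝ} (hc : 0 < c)
    (hform : ∀ (a : ℤ) (y : Fin m → ℤ), y ≠ 0 →
      c / ‖y‖ ^ s ≤ |(a : ℝ) + ∑ j, (y j : ℝ) * β j|) :
    HasSeparationExponent (Fin.cons 1 β : Fin (m + 1) → ℝ) s := by
  refine ⟨min c 1, by positivity, fun x hE => ?_⟩
  have hx : 1 ≤ ‖x‖ := one_le_norm_of_ne_zero fun h => hE (by simp [h])
  have hsplit : ∑ i, (x i : ℝ) * (Fin.cons 1 β : Fin (m + 1) → ℝ) i =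
      (x 0 : ℝ) + ∑ j, (Fin.tail x j : ℝ) * β j := by
    simp [Fin.sum_univ_succ, Fin.tail]
  rw [hsplit] at hE ⊢
  by_cases htail : Fin.tail x = 0
  · have hx0 : x 0 ≠ 0 := by
      simpa [htail] using hE
    calc min c 1 / ‖x‖ ^ s ≤ 1 :=
          div_le_one_of_le₀ ((min_le_right c 1).trans (one_le_pow₀ hx)) (by positivity)
      _ ≤ |(x 0 : ℝ)| := by exact_mod_cast Int.one_le_abs hx0
      _ = |(x 0 : ℝ) + ∑ j, (Fin.tail x j : ℝ) * β j| := by simp [htail]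
  · have htail_pos : 0 < ‖Fin.tail x‖ := norm_pos_iff.mpr htail
    have htail_le : ‖Fin.tail x‖ ≤ ‖x‖ :=
      (pi_norm_le_iff_of_nonneg (norm_nonneg x)).mpr fun j => norm_le_pi_norm x j.succ
    calc min c 1 / ‖x‖ ^ s ≤ c / ‖Fin.tail x‖ ^ s :=
          div_le_div₀ hc.le (min_le_left c 1) (pow_pos htail_pos s)
            (pow_le_pow_left₀ htail_pos.le htail_le s)
      _ ≤ _ := hform _ _ htail

end HasSeparationExponent

/-! ### Algebraic numbers -/

lemma isAlgebraic_sqrt_natCast (a : ℕ) : IsAlgebraic ℚ (√(a : ℝ)) :=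
  .of_pow two_pos (by simpa using isAlgebraic_natCast a)

lemma SubspaceTheorem.hasSeparationExponent_of_linearIndependent (subspace : SubspaceTheorem)
    {m : ℕ} {w : Fin (m + 1) → ℝ} (halg : ∀ j, IsAlgebraic ℚ (w j))
    (hli : LinearIndependent ℚ w) : HasSeparationExponent w (2 * m + 1) := by
  have hw : w 0 ≠ 0 := hli.ne_zero 0
  let β (j : Fin m) : ℝ := w j.succ / w 0
  have hcons : (Fin.cons 1 β : Fin (m + 1) → ℝ) = fun j => w j / w 0 := by
    funext j
    cases j using Fin.cases <;> simp [β, hw]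
  have hliβ : LinearIndependent ℚ (Fin.cons 1 β : Fin (m + 1) → ℝ) := by
    rw [hcons]
    simp only [div_eq_mul_inv]
    exact hli.map' (LinearMap.mulRight ℚ (w 0)⁻¹)
      (LinearMap.ker_eq_bot.mpr (mul_left_injective₀ (inv_ne_zero hw)))
  have hfin := subspace m β (fun j => (halg _).mul (halg 0).inv) hliβ (1 / (2 * m + 1))
    (by positivity)
  obtain ⟨c, hc, hform⟩ := exists_div_norm_pow_le_abs_form
    (irrational_of_linearIndependent_cons_one hliβ) (by positivity) (by
      rw [Fintype.card_fin, one_div_mul_eq_div, div_lt_one (by positivity)]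
      linarith) hfin
  rw [Fintype.card_fin] at hform
  refine (HasSeparationExponent.cons_one hc hform).of_integer_coords (D := (w 0)⁻¹)
    (inv_ne_zero hw) (r := (1 : Matrix _ _ ℤ)) fun i => ?_
  simp [hcons, Matrix.one_apply, div_eq_inv_mul]

theorem separation_bound_from_subspace_theorem_general (subspace : SubspaceTheorem)
    {ι : Type*} [Fintype ι] {α : ι → ℝ} (hα : ∀ i, IsAlgebraic ℚ (α i)) :
    HasSeparationExponent α (2 * Fintype.card ι - 1) := by
  obtain ⟨d, f, D, r, hd, hD, hli, hr⟩ := exists_linearIndependent_integer_coords ℤ (K := ℚ) α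
  have hD0 : (D : ℝ) ≠ 0 := by exact_mod_cast nonZeroDivisors.ne_zero hD
  simp only [zsmul_eq_mul] at hr
  rcases d with _ | m
  · refine ⟨1, one_pos, fun x hE => absurd ?_ hE⟩
    have hα0 (i : ι) : α i = 0 := by simpa [hD0] using hr i
    simp [hα0]
  · have hbasis := subspace.hasSeparationExponent_of_linearIndependent (fun j => hα (f j)) hli
    exact (hbasis.of_integer_coords hD0 hr).mono (by omega)

/-- Main theorem: assuming the subspace theorem, sums of square roots admit a
separation bound that is singly exponential in `n` for fixed radicands. -/
theorem separation_bound_from_subspace_theorem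
    (subspace : ∀ (m : ℕ) (β : Fin m → ℝ), (∀ i, IsAlgebraic ℚ (β i)) →
      LinearIndependent ℚ (Fin.cons 1 β : Fin (m + 1) → ℝ) →
      ∀ δ : ℝ, 0 < δ →
        {q : ℕ | 0 < q ∧ (q : ℝ) ^ (1 + δ) * ∏ i, distZ ((q : ℝ) * β i) < 1}.Finite)
    (n : ℕ) (a : Fin n → ℕ) (ha : ∀ i, 0 < a i) :
    ∃ γ : ℝ, 0 < γ ∧ ∀ x : Fin n → ℤ, x ≠ 0 →
      (∑ i, (x i : ℝ) * Real.sqrt (a i)) ≠ 0 →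
      γ / ((n : ℝ) * intNormInf n x) ^ (2 * n) ≤
        |∑ i, (x i : ℝ) * Real.sqrt (a i)| := by
  have hsep := separation_bound_from_subspace_theorem_general subspace
    fun i => isAlgebraic_sqrt_natCast (a i)
  rw [Fintype.card_fin] at hsep
  obtain ⟨γ, hγ, hbound⟩ := hsep
  refine ⟨γ, hγ, fun x hx hE => le_trans ?_ (hbound x hE)⟩
  have := one_le_norm_of_ne_zero hx
  exact div_le_div_of_nonneg_left hγ.le (by positivity) (norm_pow_le_mul_intNormInf_pow hx)
end
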